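/- (Window form of regularity.) For all positive integers r and d there exists a natural number N such that the following holds. Let F be a field with |F| ≥ N and let B ≤ M(n,F) be a matrix space. If the (d,d)-blow-up B^{(d,d)} contains a matrix of rank greater than (r − 1)d, then there exist a matrix Ã ∈ B^{(d,d)} and index sequences 1 ≤ i_1 < … < i_r ≤ n and 1 ≤ j_1 < … < j_r ≤ n such that the r×r window of Ã indexed by these sequences (an rd×rd matrix) is nonsingular. -/

import Mathlib

open Matrix Kronecker

/-- The (k,ℓ)-blow-up of a matrix space `B ≤ M(n,F)`. -/
def blowUp {F : Type} [Field F] {n : ℕ} (B : Submodule F (Matrix (Fin n) (Fin n) F))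
    (k ℓ : ℕ) : Submodule F (Matrix (Fin n × Fin k) (Fin n × Fin ℓ) F) :=
  Submodule.span F {M | ∃ A ∈ B, ∃ T : Matrix (Fin k) (Fin ℓ) F, M = A ⊗ₖ T}

/-- The `r×r` window of `A ∈ M(n,F) ⊗ M(d,F)` indexed by sequences
`i, j : Fin r → Fin n`: the `rd×rd` submatrix of blocks `(i k, j ℓ)`. -/
def window {F : Type} [Field F] {n d : ℕ} (A : Matrix (Fin n × Fin d) (Fin n × Fin d) F)
    (r : ℕ) (i j : Fin r → Fin n) : Matrix (Fin r × Fin d) (Fin r × Fin d) F :=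
  fun p q => A (i p.1, p.2) (j q.1, q.2)

/-!
The coefficients `T t` of the generic element `∑ t, b t ⊗ₖ T t` of the blow-up can be taken to be
generic elements of a division ring: give them independent variables as entries, those above the
diagonal multiplied by one further variable `z`, and let `σ` shift both indices of the variables
cyclically. Then all coefficients satisfy `C * σ(Y) = Y * C` for the cyclic shift matrix `C` with
`C ^ d = z`, and the ring of solutions of this equation is a division ring, because the weights
`v (X i j) ^ d * exp (i - j)` attached to a valuation `v` with `v ∘ σ = v` and `v z = exp 1` are
constant along cyclic diagonals, so that the sum computing some coordinate of `X *ᵥ x` has a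
strictly dominant term.

Over a division ring, a matrix without an invertible `r × r` submatrix factors through fewer than
`r` coordinates. Blocks of size `d` being scalars of the division ring, rank greater than
`(r - 1) * d` forces a nonsingular window in the generic element. The determinant of this window
is homogeneous of degree `r * d`, hence it is nonzero at some point over every field with at least
`r * d` elements.
-/

section DivisionRingMatrix

variable {D E R ι κ m n : Type*}

theorem isUnit_fromBlocks_of_isUnit_schurComplement [Ring R] [Fintype m] [Fintype n] [DecidableEq m]
    [DecidableEq n] {W W' : Matrix m m R} (hW : W * W' = 1) (hW' : W' * W = 1)
    (B : Matrix m n R) (C : Matrix n m R) (S : Matrix n n R)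
    (hS : IsUnit (S - C * W' * B)) : IsUnit (fromBlocks W B C S) := by
  obtain ⟨V, hV⟩ := hS
  let lower : (Matrix (m ⊕ n) (m ⊕ n) R)ˣ :=
    ⟨fromBlocks 1 0 (C * W') 1, fromBlocks 1 0 (-(C * W')) 1,
      by simp [fromBlocks_multiply], by simp [fromBlocks_multiply]⟩
  let diagonal : (Matrix (m ⊕ n) (m ⊕ n) R)ˣ :=
    ⟨fromBlocks W 0 0 V, fromBlocks W' 0 0 ↑V⁻¹,
      by simp [fromBlocks_multiply, hW], by simp [fromBlocks_multiply, hW']⟩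
  let upper : (Matrix (m ⊕ n) (m ⊕ n) R)ˣ :=
    ⟨fromBlocks 1 (W' * B) 0 1, fromBlocks 1 (-(W' * B)) 0 1,
      by simp [fromBlocks_multiply], by simp [fromBlocks_multiply]⟩
  have hC : C * W' * W = C := by rw [Matrix.mul_assoc, hW', Matrix.mul_one]
  have hB : W * (W' * B) = B := by rw [← Matrix.mul_assoc, hW, Matrix.one_mul]
  refine ⟨lower * diagonal * upper, ?_⟩
  simp [lower, diagonal, upper, fromBlocks_multiply, hV, hC, hB, ← Matrix.mul_assoc C W']

theorem exists_isUnit_submatrix_or_exists_eq_mul [DivisionRing D] (A : Matrix ι κ D) (r : ℕ) :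
    (∃ (f : Fin r → ι) (g : Fin r → κ), IsUnit (A.submatrix f g)) ∨
      ∃ ρ < r, ∃ (U : Matrix ι (Fin ρ) D) (V : Matrix (Fin ρ) κ D), A = U * V := by
  induction r with
  | zero => exact .inl ⟨Fin.elim0, Fin.elim0, isUnit_of_subsingleton _⟩
  | succ r ih =>
    obtain ⟨f, g, W, hW⟩ | ⟨ρ, hρ, hA⟩ := ih
    · let W' : Matrix (Fin r) (Fin r) D := ↑W⁻¹
      by_cases hA : A = A.submatrix id g * W' * A.submatrix f id
      · exact .inr ⟨r, r.lt_succ_self, _, _, hA⟩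
      obtain ⟨a, b, hab⟩ : ∃ a b, A a b ≠ (A.submatrix id g * W' * A.submatrix f id) a b := by
        by_contra! h
        exact hA (Matrix.ext h)
      have hschur : IsUnit (A.submatrix (fun _ : Fin 1 => a) (fun _ : Fin 1 => b) -
          A.submatrix (fun _ : Fin 1 => a) g * W' * A.submatrix f (fun _ : Fin 1 => b)) := by
        convert (sub_ne_zero.2 hab).isUnit.map (scalar (Fin 1)) using 1
        ext i j
        simp [Matrix.mul_apply, Subsingleton.elim i j]
      have hbordered := isUnit_fromBlocks_of_isUnit_schurComplement W.mul_inv W.inv_mul _ _ _ hschur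
      refine .inl ⟨Fin.append f (fun _ : Fin 1 => a), Fin.append g (fun _ : Fin 1 => b), ?_⟩
      convert hbordered.map (reindexRingEquiv D finSumFinEquiv) using 1
      refine (RingEquiv.symm_apply_eq _).1 ?_
      ext (i | i) (j | j) <;> simp [hW]
    · exact .inr ⟨ρ, hρ.trans r.lt_succ_self, hA⟩

theorem comp_matrix_mul [Fintype κ] [Fintype n] [NonUnitalNonAssocSemiring R] {μ : Type*}
    (U : Matrix ι κ (Matrix n n R)) (V : Matrix κ μ (Matrix n n R)) :
    comp _ _ _ _ R (U * V) = comp _ _ _ _ R U * comp _ _ _ _ R V := by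
  ext ⟨i, k⟩ ⟨j, l⟩
  simp [Matrix.mul_apply, Matrix.sum_apply, Fintype.sum_prod_type]

theorem exists_isUnit_window_of_mul_card_lt_rank [Field E] [Fintype n] [DecidableEq n]
    [Nonempty n] [Fintype κ] {D : Subring (Matrix n n E)} (hD : ∀ X : D, IsUnit X ∨ X = 0)
    {M : Matrix (ι × n) (κ × n) E} (hM : ∀ p q, (comp ι κ n n E).symm M p q ∈ D) {r : ℕ}
    (hr : (r - 1) * Fintype.card n < M.rank) :
    ∃ (f : Fin r → ι) (g : Fin r → κ),
      IsUnit (M.submatrix (Prod.map f (id : n → n)) (Prod.map g (id : n → n))) := by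
  let _ := DivisionRing.ofIsUnitOrEqZero hD
  let A : Matrix ι κ D := of fun p q => ⟨_, hM p q⟩
  have hA : M = comp ι κ n n E (A.map D.subtype) := rfl
  obtain ⟨f, g, hfg⟩ | ⟨ρ, hρ, U, V, hUV⟩ := exists_isUnit_submatrix_or_exists_eq_mul A r
  · exact ⟨f, g, (hfg.map D.subtype.mapMatrix).map (compRingEquiv (Fin r) n E)⟩
  · refine absurd hr (not_lt.2 ?_)
    rw [hA, hUV, Matrix.map_mul, comp_matrix_mul]
    calc _ ≤ (comp ι (Fin ρ) n n E (U.map D.subtype)).rank := rank_mul_le_left _ _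
      _ ≤ ρ * Fintype.card n := by
        simpa using rank_le_card_width (comp ι (Fin ρ) n n E (U.map D.subtype))
      _ ≤ (r - 1) * Fintype.card n := by gcongr; omega

theorem exists_isUnit_submatrix_of_le_rank [Field E] [Fintype κ] (A : Matrix ι κ E) {r : ℕ}
    (hr : r ≤ A.rank) : ∃ (f : Fin r → ι) (g : Fin r → κ), IsUnit (A.submatrix f g) := by
  refine (exists_isUnit_submatrix_or_exists_eq_mul A r).resolve_right ?_
  rintro ⟨ρ, hρ, U, V, rfl⟩
  refine (hρ.trans_le hr).not_ge ((rank_mul_le_left U V).trans ?_)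
  simpa using rank_le_card_width U

theorem rank_map_le_rank_map {K : Type*} [CommRing R] [Field K] [Field E] [Fintype κ]
    (M : Matrix ι κ R) (ε : R →+* K) {ψ : R →+* E} (hψ : Function.Injective ψ) :
    (M.map ε).rank ≤ (M.map ψ).rank := by
  obtain ⟨f, g, hfg⟩ := exists_isUnit_submatrix_of_le_rank (M.map ε) le_rfl
  have hdet : (M.submatrix f g).det ≠ 0 := by
    intro h
    rw [isUnit_iff_isUnit_det, submatrix_map, ← RingHom.mapMatrix_apply, ← RingHom.map_det, h,
      map_zero] at hfg
    exact not_isUnit_zero hfg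
  have hunit : IsUnit ((M.map ψ).submatrix f g) := by
    rw [isUnit_iff_isUnit_det, submatrix_map, ← RingHom.mapMatrix_apply, ← RingHom.map_det]
    exact ((map_ne_zero_iff ψ hψ).2 hdet).isUnit
  simpa [rank_of_isUnit _ hunit] using rank_submatrix_le (M.map ψ) f g

theorem exists_strictMono_isUnit_submatrix [CommRing R] [Nontrivial R] [LinearOrder ι]
    [LinearOrder κ] [Fintype n] [DecidableEq n] [Nonempty n] {r : ℕ}
    (A : Matrix (ι × n) (κ × n) R) (f : Fin r → ι) (g : Fin r → κ)
    (h : IsUnit (A.submatrix (Prod.map f (id : n → n)) (Prod.map g id))) :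
    ∃ (i : Fin r → ι) (j : Fin r → κ), StrictMono i ∧ StrictMono j ∧
      IsUnit (A.submatrix (Prod.map i (id : n → n)) (Prod.map j id)) := by
  obtain ⟨k⟩ := ‹Nonempty n›
  have hf : Function.Injective f := fun a b hab =>
    congrArg Prod.fst ((linearIndependent_rows_of_isUnit h).injective
      (a₁ := (a, k)) (a₂ := (b, k)) (by ext; simp [hab]))
  have hg : Function.Injective g := fun a b hab =>
    congrArg Prod.fst ((linearIndependent_cols_of_isUnit h).injective
      (a₁ := (a, k)) (a₂ := (b, k)) (by ext; simp [hab]))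
  refine ⟨f ∘ Tuple.sort f, g ∘ Tuple.sort g,
    (Tuple.monotone_sort f).strictMono_of_injective (hf.comp (Equiv.injective _)),
    (Tuple.monotone_sort g).strictMono_of_injective (hg.comp (Equiv.injective _)), ?_⟩
  exact (isUnit_submatrix_equiv ((Tuple.sort f).prodCongr (Equiv.refl n))
    ((Tuple.sort g).prodCongr (Equiv.refl n))).2 h

end DivisionRingMatrix

section TwistedCentralizer

variable {E n : Type*} [Fintype n] [DecidableEq n]

/-- The ring of matrices `X` with `C * σ(X) = X * C`, where `σ` acts entrywise: the matrices fixed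
by the twisted conjugation `X ↦ C * σ(X) * C⁻¹` when `C` is invertible. -/
def twistedCentralizer [Ring E] (σ : E →+* E) (C : Matrix n n E) :
    Subring (Matrix n n E) where
  carrier := {X | C * X.map σ = X * C}
  mul_mem' {X Y} hX hY := by
    simp only [Set.mem_ofPred_eq] at hX hY ⊢
    rw [Matrix.map_mul, ← Matrix.mul_assoc, hX, Matrix.mul_assoc, hY, Matrix.mul_assoc]
  one_mem' := by simp
  add_mem' {X Y} hX hY := by
    simp only [Set.mem_ofPred_eq] at hX hY ⊢
    rw [Matrix.map_add _ (map_add σ), Matrix.mul_add, hX, hY, Matrix.add_mul]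
  zero_mem' := by simp
  neg_mem' {X} hX := by
    simp only [Set.mem_ofPred_eq] at hX ⊢
    rw [Matrix.map_neg _ (map_neg σ), Matrix.mul_neg, hX, Matrix.neg_mul]

theorem mem_twistedCentralizer [Ring E] {σ : E →+* E}
    {C X : Matrix n n E} : X ∈ twistedCentralizer σ C ↔ C * X.map σ = X * C :=
  Iff.rfl

theorem smul_mem_twistedCentralizer [CommRing E] {σ : E →+* E}
    {C X : Matrix n n E} {c : E} (hc : σ c = c) (hX : X ∈ twistedCentralizer σ C) :
    c • X ∈ twistedCentralizer σ C := by
  rw [mem_twistedCentralizer] at hX ⊢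
  rw [Matrix.map_smul' σ c X (map_mul σ), hc, Matrix.mul_smul, hX, Matrix.smul_mul]

theorem isUnit_twistedCentralizer_iff [Ring E] {σ : E →+* E}
    {C : Matrix n n E} {X : twistedCentralizer σ C} :
    IsUnit X ↔ IsUnit (X : Matrix n n E) := by
  refine ⟨fun h => h.map (twistedCentralizer σ C).subtype, ?_⟩
  rintro ⟨U, hU⟩
  have hX : C * (U : Matrix n n E).map σ = U * C := hU ▸ X.2
  have hUσ : (U : Matrix n n E).map σ * (↑U⁻¹ : Matrix n n E).map σ = 1 := by
    rw [← Matrix.map_mul, U.mul_inv, Matrix.map_one _ (map_zero σ) (map_one σ)]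
  have hinv : (↑U⁻¹ : Matrix n n E) ∈ twistedCentralizer σ C := by
    rw [mem_twistedCentralizer]
    calc C * (↑U⁻¹ : Matrix n n E).map σ
        = ↑U⁻¹ * (↑U * C) * (↑U⁻¹ : Matrix n n E).map σ := by
          rw [← Matrix.mul_assoc, U.inv_mul, Matrix.one_mul]
      _ = ↑U⁻¹ * C := by
        rw [← hX, Matrix.mul_assoc, Matrix.mul_assoc, hUσ, Matrix.mul_one]
  exact ⟨⟨X, ⟨_, hinv⟩, Subtype.ext (by simp [← hU]), Subtype.ext (by simp [← hU])⟩, rfl⟩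

/-- The matrix of the cyclic shift `eⱼ ↦ eⱼ₊₁` of the standard basis, twisted by a factor `z` when
the last basis vector returns to the first; its `(d + 1)`-st power is the scalar matrix `z`. -/
def cyclicShift [Zero E] [One E] (d : ℕ) (z : E) : Matrix (Fin (d + 1)) (Fin (d + 1)) E :=
  of fun i j => if i = j + 1 then if j = Fin.last d then z else 1 else 0

theorem mem_twistedCentralizer_cyclicShift [Ring E] {d : ℕ} {σ : E →+* E} {z : E}
    {X : Matrix (Fin (d + 1)) (Fin (d + 1)) E} :
    X ∈ twistedCentralizer σ (cyclicShift d z) ↔ ∀ i j,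
      (if i = Fin.last d then z else 1) * σ (X i j) =
        X (i + 1) (j + 1) * if j = Fin.last d then z else 1 := by
  rw [mem_twistedCentralizer, ← Matrix.ext_iff]
  rw [← (Equiv.addRight (1 : Fin (d + 1))).forall_congr_right]
  simp [Matrix.mul_apply, cyclicShift]

end TwistedCentralizer

section Valued

open WithZero

variable {E : Type*} [Field E] {d : ℕ}

/-- The `(d + 1)`-st power of the valuation that the entry `X i j` gets after conjugating `X` by the
diagonal matrix with entries `q ^ i`, where `q` is a `(d + 1)`-st root of an element of valuation
`exp 1`. Taking the power avoids adjoining `q`. -/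
def entryWeight (v : Valuation E ℤᵐ⁰) (X : Matrix (Fin (d + 1)) (Fin (d + 1)) E)
    (i j : Fin (d + 1)) : ℤᵐ⁰ :=
  v (X i j) ^ (d + 1) * exp (i - j : ℤ)

/-- The analogue of `entryWeight` for the coordinates of a vector. -/
def coordWeight (v : Valuation E ℤᵐ⁰) (x : Fin (d + 1) → E) (k : Fin (d + 1)) : ℤᵐ⁰ :=
  v (x k) ^ (d + 1) * exp (k : ℤ)

variable {v : Valuation E ℤᵐ⁰} {σ : E →+* E} {z : E} {X : Matrix (Fin (d + 1)) (Fin (d + 1)) E}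
  {x : Fin (d + 1) → E}

theorem entryWeight_pos_iff {i j : Fin (d + 1)} : 0 < entryWeight v X i j ↔ X i j ≠ 0 := by
  simp [entryWeight, zero_lt_iff]

theorem coordWeight_pos_iff {k : Fin (d + 1)} : 0 < coordWeight v x k ↔ x k ≠ 0 := by
  simp [coordWeight, zero_lt_iff]

theorem entryWeight_mul_coordWeight (i k : Fin (d + 1)) :
    entryWeight v X i k * coordWeight v x k = v (X i k * x k) ^ (d + 1) * exp (i : ℤ) := by
  simp only [entryWeight, coordWeight, exp_sub, map_mul, mul_pow]
  field_simp

theorem eq_of_coordWeight_eq {i j : Fin (d + 1)} (hi : x i ≠ 0)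
    (h : coordWeight v x i = coordWeight v x j) : i = j := by
  have hj : x j ≠ 0 := coordWeight_pos_iff.1 (h ▸ coordWeight_pos_iff.2 hi)
  rw [coordWeight, coordWeight, ← exp_log (v.ne_zero_iff.2 hi), ← exp_log (v.ne_zero_iff.2 hj)] at h
  simp only [← WithZero.exp_nsmul, ← exp_add, exp_inj, nsmul_eq_mul] at h
  have hmod : (i : ℤ) ≡ (j : ℤ) [ZMOD (d + 1 : ℕ)] :=
    Int.modEq_iff_dvd.2 ⟨log (v (x i)) - log (v (x j)), by linear_combination -h⟩
  exact Fin.ext ((Int.natCast_modEq_iff.1 hmod).eq_of_lt_of_lt i.2 j.2)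

theorem entryWeight_add_one_add_one (hσ : ∀ x, v (σ x) = v x) (hz : v z = exp 1)
    (hX : X ∈ twistedCentralizer σ (cyclicShift d z)) (i j : Fin (d + 1)) :
    entryWeight v X (i + 1) (j + 1) = entryWeight v X i j := by
  have hshift (k : Fin (d + 1)) : v (if k = Fin.last d then z else 1) ^ (d + 1) =
      exp (k + 1 - (k + 1 : Fin (d + 1)) : ℤ) := by
    rw [Fin.val_add_one]
    split_ifs with hk
    · simp [hz, hk, ← WithZero.exp_nsmul]
    · simp
  have hpow := congrArg (v · ^ (d + 1)) (mem_twistedCentralizer_cyclicShift.1 hX i j)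
  simp only [map_mul, mul_pow, hσ, hshift] at hpow
  calc v (X (i + 1) (j + 1)) ^ (d + 1) * exp ((i + 1 : Fin (d + 1)) - (j + 1 : Fin (d + 1)) : ℤ)
      = v (X (i + 1) (j + 1)) ^ (d + 1) * exp (j + 1 - (j + 1 : Fin (d + 1)) : ℤ) *
          exp ((i + 1 : Fin (d + 1)) - (j + 1) : ℤ) := by
        rw [mul_assoc, ← exp_add]
        congr 2
        ring
    _ = v (X i j) ^ (d + 1) * (exp (i + 1 - (i + 1 : Fin (d + 1)) : ℤ) *
          exp ((i + 1 : Fin (d + 1)) - (j + 1) : ℤ)) := by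
        rw [← hpow, mul_comm (exp _), mul_assoc]
    _ = v (X i j) ^ (d + 1) * exp (i - j : ℤ) := by
        rw [← exp_add]
        congr 2
        ring

theorem entryWeight_add_add (hσ : ∀ x, v (σ x) = v x) (hz : v z = exp 1)
    (hX : X ∈ twistedCentralizer σ (cyclicShift d z)) (i j k : Fin (d + 1)) :
    entryWeight v X (i + k) (j + k) = entryWeight v X i j := by
  induction k using Fin.induction with
  | zero => simp
  | succ l ih =>
    rw [← Fin.coeSucc_eq_succ, ← add_assoc, ← add_assoc, entryWeight_add_one_add_one hσ hz hX, ih]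

theorem exists_dominant_term_mulVec (hσ : ∀ x, v (σ x) = v x) (hz : v z = exp 1)
    (hX : X ∈ twistedCentralizer σ (cyclicShift d z)) (hX0 : X ≠ 0) (hx : x ≠ 0) :
    ∃ i j, X i j * x j ≠ 0 ∧ ∀ k ≠ j, v (X i k * x k) < v (X i j * x j) := by
  obtain ⟨⟨i₀, j₀⟩, hmax⟩ :=
    Finite.exists_max fun p : Fin (d + 1) × Fin (d + 1) => entryWeight v X p.1 p.2
  obtain ⟨j, hj⟩ := Finite.exists_max (coordWeight v x)
  have hpos : 0 < entryWeight v X i₀ j₀ := by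
    obtain ⟨a, b, hab⟩ : ∃ a b, X a b ≠ 0 := by
      by_contra! h
      exact hX0 (Matrix.ext h)
    exact (entryWeight_pos_iff.2 hab).trans_le (hmax (a, b))
  have hxj : x j ≠ 0 := by
    obtain ⟨k, hk⟩ := Function.ne_iff.1 hx
    exact coordWeight_pos_iff.1 ((coordWeight_pos_iff.2 hk).trans_le (hj k))
  -- The row in which the cyclic diagonal of largest weight meets column `j`.
  let i := i₀ + (j - j₀)
  have hij : entryWeight v X i j = entryWeight v X i₀ j₀ := by
    simpa [i] using entryWeight_add_add hσ hz hX i₀ j₀ (j - j₀)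
  refine ⟨i, j, mul_ne_zero (entryWeight_pos_iff.1 (hij ▸ hpos)) hxj, fun k hk => ?_⟩
  have hlt : coordWeight v x k < coordWeight v x j :=
    (hj k).lt_of_ne fun h => hk (eq_of_coordWeight_eq hxj h.symm).symm
  refine lt_of_pow_lt_pow_left₀ (d + 1) zero_le ?_
  refine lt_of_mul_lt_mul_right (a := exp (i : ℤ)) ?_ zero_le
  rw [← entryWeight_mul_coordWeight, ← entryWeight_mul_coordWeight, hij]
  calc entryWeight v X i k * coordWeight v x k
      ≤ entryWeight v X i₀ j₀ * coordWeight v x k := by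
        gcongr
        exact hmax (i, k)
    _ < entryWeight v X i₀ j₀ * coordWeight v x j := by gcongr

theorem mulVec_ne_zero_of_mem_twistedCentralizer (hσ : ∀ x, v (σ x) = v x) (hz : v z = exp 1)
    (hX : X ∈ twistedCentralizer σ (cyclicShift d z)) (hX0 : X ≠ 0) (hx : x ≠ 0) :
    X *ᵥ x ≠ 0 := by
  obtain ⟨i, j, hij, hlt⟩ := exists_dominant_term_mulVec hσ hz hX hX0 hx
  have hval : v ((X *ᵥ x) i) = v (X i j * x j) :=
    v.map_sum_eq_of_lt (Finset.mem_univ j) fun k hk => hlt k (by simpa using hk)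
  intro h
  rw [h, Pi.zero_apply, map_zero] at hval
  exact hij (v.zero_iff.1 hval.symm)

theorem isUnit_or_eq_zero_of_twistedCentralizer (hσ : ∀ x, v (σ x) = v x) (hz : v z = exp 1)
    (X : twistedCentralizer σ (cyclicShift d z)) : IsUnit X ∨ X = 0 := by
  refine or_iff_not_imp_right.2 fun hX0 => ?_
  have hX0' : (X : Matrix (Fin (d + 1)) (Fin (d + 1)) E) ≠ 0 := fun h => hX0 (Subtype.ext h)
  rw [isUnit_twistedCentralizer_iff, ← mulVec_injective_iff_isUnit]
  intro x y hxy
  by_contra hne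
  refine mulVec_ne_zero_of_mem_twistedCentralizer hσ hz X.2 hX0' (sub_ne_zero.2 hne) ?_
  rw [mulVec_sub, sub_eq_zero]
  exact hxy

end Valued

section RatFuncExtension

universe u v

variable {F L : Type*} [CommRing F] [Field L] [Algebra F L]

theorem nonZeroDivisors_le_comap_polynomialMapAlgHom (τ : L →ₐ[F] L) :
    nonZeroDivisors (Polynomial L) ≤
      (nonZeroDivisors (Polynomial L)).comap (Polynomial.mapAlgHom τ) :=
  nonZeroDivisors_le_comap_nonZeroDivisors_of_injective _
    (Polynomial.map_injective (τ : L →+* L) τ.injective)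

/-- The endomorphism of the rational function field that extends `τ` and fixes the variable. -/
noncomputable def ratFuncMap (τ : L →ₐ[F] L) : RatFunc L →ₐ[F] RatFunc L :=
  RatFunc.mapAlgHom (Polynomial.mapAlgHom τ) (nonZeroDivisors_le_comap_polynomialMapAlgHom τ)

theorem ratFuncMap_algebraMap_div_algebraMap (τ : L →ₐ[F] L) (p q : Polynomial L) :
    ratFuncMap τ (algebraMap _ (RatFunc L) p / algebraMap _ (RatFunc L) q) =
      algebraMap _ _ (p.map (τ : L →+* L)) / algebraMap _ _ (q.map (τ : L →+* L)) :=
  RatFunc.map_apply_div (Polynomial.mapAlgHom τ)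
    (nonZeroDivisors_le_comap_polynomialMapAlgHom τ) p q

theorem ratFuncMap_algebraMap (τ : L →ₐ[F] L) (p : Polynomial L) :
    ratFuncMap τ (algebraMap _ (RatFunc L) p) = algebraMap _ _ (p.map (τ : L →+* L)) := by
  simpa using ratFuncMap_algebraMap_div_algebraMap τ p 1

theorem ratFuncMap_C (τ : L →ₐ[F] L) (a : L) : ratFuncMap τ (RatFunc.C a) = RatFunc.C (τ a) := by
  rw [← RatFunc.algebraMap_C, ratFuncMap_algebraMap, Polynomial.map_C, RatFunc.algebraMap_C]
  rfl

theorem ratFuncMap_X (τ : L →ₐ[F] L) : ratFuncMap τ RatFunc.X = RatFunc.X := by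
  rw [← RatFunc.algebraMap_X, ratFuncMap_algebraMap, Polynomial.map_X]

theorem inftyValuation_ratFuncMap [DecidableEq (RatFunc L)] (τ : L →ₐ[F] L) (x : RatFunc L) :
    RatFunc.inftyValuation L (ratFuncMap τ x) = RatFunc.inftyValuation L x := by
  have hpoly (p : Polynomial L) :
      RatFunc.inftyValuation L (algebraMap _ (RatFunc L) (p.map (τ : L →+* L))) =
        RatFunc.inftyValuation L (algebraMap _ (RatFunc L) p) := by
    by_cases hp : p = 0
    · simp [hp]
    · rw [RatFunc.inftyValuation_apply, RatFunc.inftyValuation_apply,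
        RatFunc.inftyValuation.polynomial L hp, RatFunc.inftyValuation.polynomial L
          ((Polynomial.map_ne_zero_iff (τ : L →+* L).injective).2 hp), Polynomial.natDegree_map]
  rw [← RatFunc.num_div_denom x, ratFuncMap_algebraMap_div_algebraMap, map_div₀, map_div₀,
    hpoly, hpoly]

theorem algebraicIndependent_C_mul_X_pow {Y : Type*} {a : Y → L}
    (ha : AlgebraicIndependent F a) (w : Y → ℕ) :
    AlgebraicIndependent F fun y => RatFunc.C (a y) * RatFunc.X ^ w y := by
  have hpoly : AlgebraicIndependent F fun y => Polynomial.C (a y) * Polynomial.X ^ w y := by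
    refine AlgebraicIndependent.of_comp ((Polynomial.aeval (1 : L)).restrictScalars F) ?_
    convert ha using 1
    ext y
    simp
  convert hpoly.map' (f := IsScalarTower.toAlgHom F (Polynomial L) (RatFunc L))
    (RatFunc.algebraMap_injective L) using 1
  ext y
  simp

theorem exists_algebraicIndependent_algHom (F : Type u) {Y : Type v} [CommRing F] [IsDomain F]
    {s : Y → Y} (hs : Function.Injective s) :
    ∃ (L : Type (max v u)) (_ : Field L) (_ : Algebra F L) (a : Y → L) (τ : L →ₐ[F] L),
      AlgebraicIndependent F a ∧ ∀ y, τ (a y) = a (s y) := by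
  let R := MvPolynomial Y F
  let ι : R →ₐ[F] FractionRing R := IsScalarTower.toAlgHom F R (FractionRing R)
  have hι : Function.Injective ι := FaithfulSMul.algebraMap_injective R (FractionRing R)
  let g : R →ₐ[F] FractionRing R := ι.comp (MvPolynomial.rename s)
  have hg : Function.Injective g := hι.comp (MvPolynomial.rename_injective s hs)
  refine ⟨FractionRing R, inferInstance, inferInstance, fun y => ι (MvPolynomial.X y),
    IsFractionRing.liftAlgHom hg, (MvPolynomial.algebraicIndependent_X Y F).map' hι, fun y => ?_⟩
  calc IsFractionRing.liftAlgHom hg (ι (MvPolynomial.X y)) = g (MvPolynomial.X y) :=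
        IsFractionRing.lift_algebraMap hg _
    _ = ι (MvPolynomial.X (s y)) := congrArg ι (MvPolynomial.rename_X s y)

end RatFuncExtension

section GenericBlowUp

open MvPolynomial in
/-- The generic element `∑ t, b t ⊗ₖ Y t` of the blow-up of the span of the matrices `b t`: the
entry `(i, j)` of `Y t` is the variable with index `(t, i, j)`. -/
noncomputable def genericBlowUp {F ι κ μ : Type*} (n : Type*) [CommSemiring F] [Fintype μ]
    (b : μ → Matrix ι κ F) : Matrix (ι × n) (κ × n) (MvPolynomial (μ × n × n) F) :=
  ∑ t, (b t).map C ⊗ₖ of fun i j => X (t, i, j)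

variable {F ι κ μ n : Type*} [Fintype μ]

theorem genericBlowUp_map_aeval {E : Type*} [CommSemiring F] [CommSemiring E] [Algebra F E]
    (b : μ → Matrix ι κ F) (x : μ × n × n → E) :
    (genericBlowUp n b).map (MvPolynomial.aeval x) =
      ∑ t, (b t).map (algebraMap F E) ⊗ₖ of fun i j => x (t, i, j) := by
  ext p q
  simp [genericBlowUp, Matrix.sum_apply]

theorem genericBlowUp_map_eval [CommSemiring F] (b : μ → Matrix ι κ F) (x : μ × n × n → F) :
    (genericBlowUp n b).map (MvPolynomial.eval x) = ∑ t, b t ⊗ₖ of fun i j => x (t, i, j) :=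
  genericBlowUp_map_aeval b x

theorem isHomogeneous_genericBlowUp_apply [CommSemiring F] (b : μ → Matrix ι κ F)
    (p : ι × n) (q : κ × n) : (genericBlowUp n b p q).IsHomogeneous 1 := by
  rw [genericBlowUp, Matrix.sum_apply]
  refine MvPolynomial.IsHomogeneous.sum _ _ _ fun t _ => ?_
  simpa using (MvPolynomial.isHomogeneous_C _ (b t p.1 q.1)).mul
    (MvPolynomial.isHomogeneous_X F (t, p.2, q.2))

theorem isHomogeneous_det_of_forall_isHomogeneous [CommRing F] {σ m : Type*} [Fintype m]
    [DecidableEq m] {k : ℕ} {M : Matrix m m (MvPolynomial σ F)}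
    (hM : ∀ i j, (M i j).IsHomogeneous k) : M.det.IsHomogeneous (Fintype.card m * k) := by
  rw [det_apply]
  refine MvPolynomial.IsHomogeneous.sum _ _ _ fun π _ => ?_
  have hprod : (∏ i, M (π i) i).IsHomogeneous (Fintype.card m * k) := by
    simpa using MvPolynomial.IsHomogeneous.prod Finset.univ _ (fun _ => k) fun i _ => hM (π i) i
  rw [Units.smul_def]
  exact (MvPolynomial.homogeneousSubmodule σ F _).toAddSubgroup.zsmul_mem hprod _

theorem isHomogeneous_det_window_genericBlowUp [CommRing F] [Fintype n] [DecidableEq n]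
    (b : μ → Matrix ι κ F) {r : ℕ} (f : Fin r → ι) (g : Fin r → κ) :
    ((genericBlowUp n b).submatrix (Prod.map f id) (Prod.map g id)).det.IsHomogeneous
      (r * Fintype.card n) := by
  simpa using isHomogeneous_det_of_forall_isHomogeneous
    (M := (genericBlowUp n b).submatrix (Prod.map f id) (Prod.map g id))
    fun _ _ => isHomogeneous_genericBlowUp_apply b _ _

end GenericBlowUp

section WeightedVariable

variable {F L ι κ μ : Type*} [CommRing F] [Field L] [Algebra F L] {d : ℕ}
  {a : μ × Fin (d + 1) × Fin (d + 1) → L} {τ : L →ₐ[F] L}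

/-- The entry of the coefficient `Y t` of a generic element with coefficients in the twisted
centralizer of `cyclicShift d RatFunc.X`, indexed like the variables of `genericBlowUp`. -/
noncomputable def weightedVariable (a : μ × Fin (d + 1) × Fin (d + 1) → L)
    (y : μ × Fin (d + 1) × Fin (d + 1)) : RatFunc L :=
  RatFunc.C (a y) * RatFunc.X ^ if y.2.1 < y.2.2 then 1 else 0

theorem algebraicIndependent_weightedVariable (ha : AlgebraicIndependent F a) :
    AlgebraicIndependent F (weightedVariable a) :=
  algebraicIndependent_C_mul_X_pow ha _

theorem of_weightedVariable_mem_twistedCentralizer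
    (hτ : ∀ t i j, τ (a (t, i, j)) = a (t, i + 1, j + 1)) (t : μ) :
    (of fun i j => weightedVariable a (t, i, j)) ∈
      twistedCentralizer (ratFuncMap τ : RatFunc L →+* RatFunc L) (cyclicShift d RatFunc.X) := by
  refine mem_twistedCentralizer_cyclicShift.2 fun i j => ?_
  have hpow : ∀ i : Fin (d + 1), (if i = Fin.last d then (RatFunc.X : RatFunc L) else 1) =
      RatFunc.X ^ if i = Fin.last d then 1 else 0 := by
    intro i
    split_ifs <;> simp
  have hexp : (if i = Fin.last d then 1 else 0) + (if i < j then 1 else 0) =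
      (if i + 1 < j + 1 then 1 else 0) + if j = Fin.last d then 1 else 0 := by
    simp only [Fin.lt_def, Fin.val_add_one, Fin.ext_iff, Fin.val_last]
    split_ifs <;> omega
  simp only [of_apply, weightedVariable, hpow, RingHom.coe_coe, map_mul, map_pow, ratFuncMap_C,
    ratFuncMap_X, hτ]
  rw [mul_left_comm, ← pow_add, hexp, pow_add, mul_assoc]

theorem genericBlowUp_map_weightedVariable_mem_twistedCentralizer [Fintype μ]
    (hτ : ∀ t i j, τ (a (t, i, j)) = a (t, i + 1, j + 1)) (b : μ → Matrix ι κ F) (p : ι) (q : κ) :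
    (comp ι κ _ _ _).symm
        ((genericBlowUp (Fin (d + 1)) b).map (MvPolynomial.aeval (weightedVariable a))) p q ∈
      twistedCentralizer (ratFuncMap τ : RatFunc L →+* RatFunc L) (cyclicShift d RatFunc.X) := by
  have hblock : (comp ι κ _ _ _).symm
      ((genericBlowUp (Fin (d + 1)) b).map (MvPolynomial.aeval (weightedVariable a))) p q =
        ∑ t, algebraMap F (RatFunc L) (b t p q) • of fun i j => weightedVariable a (t, i, j) := by
    ext i j
    simp [genericBlowUp_map_aeval, Matrix.sum_apply, -algebraMap_smul]
  rw [hblock]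
  exact sum_mem fun t _ => smul_mem_twistedCentralizer ((ratFuncMap τ).commutes _)
    (of_weightedVariable_mem_twistedCentralizer hτ t)

end WeightedVariable

section Regularity

variable {F ι κ μ : Type*} [Field F] [Fintype κ] [Fintype μ] {d r : ℕ} {b : μ → Matrix ι κ F}
  {T : μ → Matrix (Fin (d + 1)) (Fin (d + 1)) F}

theorem exists_det_window_genericBlowUp_ne_zero (hr : (r - 1) * (d + 1) < (∑ t, b t ⊗ₖ T t).rank) :
    ∃ (f : Fin r → ι) (g : Fin r → κ),
      ((genericBlowUp (Fin (d + 1)) b).submatrix (Prod.map f id) (Prod.map g id)).det ≠ 0 := by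
  classical
  obtain ⟨L, _, _, a, τ, ha, hτ⟩ := exists_algebraicIndependent_algHom F
    (s := fun y : μ × Fin (d + 1) × Fin (d + 1) => (y.1, y.2.1 + 1, y.2.2 + 1))
    fun y y' h => by simpa [Prod.ext_iff] using h
  let ψ : MvPolynomial (μ × Fin (d + 1) × Fin (d + 1)) F →ₐ[F] RatFunc L :=
    MvPolynomial.aeval (weightedVariable a)
  have hψ : Function.Injective ψ.toRingHom := algebraicIndependent_weightedVariable ha
  have hrank : (r - 1) * Fintype.card (Fin (d + 1)) <
      ((genericBlowUp (Fin (d + 1)) b).map ψ).rank := by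
    refine lt_of_lt_of_le ?_ (rank_map_le_rank_map (genericBlowUp (Fin (d + 1)) b)
      (MvPolynomial.eval fun y => T y.1 y.2.1 y.2.2) hψ)
    rw [genericBlowUp_map_eval, Fintype.card_fin]
    exact hr
  obtain ⟨f, g, hfg⟩ := exists_isUnit_window_of_mul_card_lt_rank
    (isUnit_or_eq_zero_of_twistedCentralizer (v := RatFunc.inftyValuation L)
      (inftyValuation_ratFuncMap τ) (RatFunc.inftyValuation.X L))
    (genericBlowUp_map_weightedVariable_mem_twistedCentralizer
      (fun t i j => hτ (t, i, j)) b) hrank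
  refine ⟨f, g, fun h => ?_⟩
  rw [submatrix_map, isUnit_iff_isUnit_det, ← AlgHom.mapMatrix_apply, ← AlgHom.map_det, h,
    map_zero] at hfg
  exact not_isUnit_zero hfg

theorem exists_isUnit_window_sum_kronecker (hF : ((r * (d + 1) : ℕ) : Cardinal) ≤ Cardinal.mk F)
    (hr : (r - 1) * (d + 1) < (∑ t, b t ⊗ₖ T t).rank) :
    ∃ (T' : μ → Matrix (Fin (d + 1)) (Fin (d + 1)) F) (f : Fin r → ι) (g : Fin r → κ),
      IsUnit ((∑ t, b t ⊗ₖ T' t).submatrix (Prod.map f (id : Fin (d + 1) → Fin (d + 1)))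
        (Prod.map g id)) := by
  obtain ⟨f, g, hdet⟩ := exists_det_window_genericBlowUp_ne_zero hr
  have hhom := isHomogeneous_det_window_genericBlowUp (n := Fin (d + 1)) b f g
  rw [Fintype.card_fin] at hhom
  obtain ⟨x, hx⟩ : ∃ x, MvPolynomial.eval x ((genericBlowUp (Fin (d + 1)) b).submatrix
      (Prod.map f id) (Prod.map g id)).det ≠ 0 := by
    contrapose! hdet
    exact hhom.eq_zero_of_forall_eval_eq_zero_of_le_card hdet hF
  refine ⟨fun t => of fun i j => x (t, i, j), f, g, ?_⟩
  rw [← genericBlowUp_map_eval, submatrix_map, isUnit_iff_isUnit_det, ← RingHom.mapMatrix_apply,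
    ← RingHom.map_det]
  exact hx.isUnit

end Regularity

theorem mem_blowUp_iff_exists_sum {F : Type} [Field F] {n k l : ℕ}
    {B : Submodule F (Matrix (Fin n) (Fin n) F)} {A : Matrix (Fin n × Fin k) (Fin n × Fin l) F} :
    A ∈ blowUp B k l ↔ ∃ (m : ℕ) (b : Fin m → Matrix (Fin n) (Fin n) F)
      (T : Fin m → Matrix (Fin k) (Fin l) F), (∀ t, b t ∈ B) ∧ A = ∑ t, b t ⊗ₖ T t := by
  constructor
  · intro hA
    obtain ⟨m, c, g, rfl⟩ := Submodule.mem_span_set'.1 hA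
    choose b hb T hT using fun t => (g t).2
    refine ⟨m, b, fun t => c t • T t, hb, Finset.sum_congr rfl fun t _ => ?_⟩
    rw [hT, kronecker_smul]
  · rintro ⟨m, b, T, hb, rfl⟩
    exact Submodule.sum_mem _ fun t _ => Submodule.subset_span ⟨b t, hb t, T t, rfl⟩

/-- Window form of regularity: for all positive `r, d` there is `N` such that over any
field `F` with `|F| ≥ N`, if the `(d,d)`-blow-up of `B ≤ M(n,F)` contains a matrix of rank
greater than `(r−1)·d`, then some matrix in the blow-up has a nonsingular `r×r` window,
indexed by strictly increasing index sequences. -/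
theorem stmt5 (r d : ℕ) (hr : 0 < r) (hd : 0 < d) :
    ∃ N : ℕ, ∀ (F : Type) (_ : Field F),
      (N : Cardinal) ≤ Cardinal.mk F →
      ∀ (n : ℕ) (B : Submodule F (Matrix (Fin n) (Fin n) F)),
        (∃ A ∈ blowUp B d d, (r - 1) * d < A.rank) →
        ∃ A' ∈ blowUp B d d, ∃ i j : Fin r → Fin n,
          StrictMono i ∧ StrictMono j ∧ IsUnit (window A' r i j).det := by
  obtain ⟨d, rfl⟩ := Nat.exists_eq_add_one.2 hd
  refine ⟨r * (d + 1), fun F _ hF n B ⟨A, hA, hrank⟩ => ?_⟩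
  obtain ⟨m, b, T, hb, rfl⟩ := mem_blowUp_iff_exists_sum.1 hA
  obtain ⟨T', f, g, hfg⟩ := exists_isUnit_window_sum_kronecker hF hrank
  obtain ⟨i, j, hi, hj, hij⟩ := exists_strictMono_isUnit_submatrix _ f g hfg
  exact ⟨_, mem_blowUp_iff_exists_sum.2 ⟨m, b, T', hb, rfl⟩, i, j, hi, hj,
    (isUnit_iff_isUnit_det _).1 hij⟩
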